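/- arXiv:math/0611929 — 2 statements merged into one kernel-verified Lean document; each statement's English description precedes it below -/
import Mathlib

section
/- Let S be a tight representation of a semigroupoid Λ in a unital C*-algebra, and suppose f ∈ Λ is such that Λ^f = {e} for a single element e satisfying (e,e) ∈ Λ⁽²⁾ and e·e = e. Then S_e is a projection and S_e = Q_f. -/
/-!
Tightness for the covering `{e}` of `Λ^f` gives `P_e = Q_f`. As `S_e` is an idempotent partial
isometry, `S_e* = S_e* S_e S_e* = S_e* S_e S_e S_e* = Q_e P_e`, a product of commuting self-adjoint
elements. Hence `S_e` is a projection, and `S_e = S_e S_e* = P_e = Q_f`.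
-/

universe u

/-- A semigroupoid: a set with a partially defined associative operation
(Exel, Definition 2.1). -/
structure Semigroupoid (Λ : Type u) where
  /-- the set of composable pairs -/
  D2 : Λ → Λ → Prop
  /-- the (partially meaningful) multiplication -/
  mul : Λ → Λ → Λ
  assoc₁ : ∀ f g h, D2 f g → D2 g h →
    D2 (mul f g) h ∧ D2 f (mul g h) ∧ mul (mul f g) h = mul f (mul g h)
  assoc₂ : ∀ f g h, D2 f g → D2 (mul f g) h →
    D2 g h ∧ D2 f (mul g h) ∧ mul (mul f g) h = mul f (mul g h)
  assoc₃ : ∀ f g h, D2 g h → D2 f (mul g h) →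
    D2 f g ∧ D2 (mul f g) h ∧ mul (mul f g) h = mul f (mul g h)

namespace Semigroupoid

variable {Λ : Type u} (G : Semigroupoid Λ)

/-- `f` divides `g` : either `f = g` or `f h = g` for some `h`. -/
def Divides (f g : Λ) : Prop := f = g ∨ ∃ h, G.D2 f h ∧ G.mul f h = g

/-- `f` and `g` intersect: they admit a common multiple. -/
def Intersects (f g : Λ) : Prop := ∃ m, G.Divides f m ∧ G.Divides g m

/-- `f` and `g` are disjoint: no common multiple. -/
def Disjnt (f g : Λ) : Prop := ¬ G.Intersects f g

/-- `Λ^f`, the set of elements composable with `f` on the right. -/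
def lam (f : Λ) : Set Λ := {g | G.D2 f g}

/-- A spring: an element `f` with `Λ^f = ∅`. -/
def IsSpring (f : Λ) : Prop := ∀ g, ¬ G.D2 f g

/-- `H` is a covering of `X`: `H ⊆ X` and every element of `X` intersects some element of `H`. -/
def IsCovering (H X : Set Λ) : Prop := H ⊆ X ∧ ∀ f ∈ X, ∃ h ∈ H, G.Intersects f h

/-- `H` is a partition of `X`: a covering whose elements are pairwise disjoint. -/
def IsPartition (H X : Set Λ) : Prop :=
  G.IsCovering H X ∧ ∀ h₁ ∈ H, ∀ h₂ ∈ H, h₁ ≠ h₂ → G.Disjnt h₁ h₂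

/-- `Λ^{F,G'} = (⋂_{f∈F} Λ^f) ∩ (⋂_{g∈G'} (Λ \ Λ^g))`. -/
def lamFG (F G' : Finset Λ) : Set Λ :=
  {h | (∀ f ∈ F, G.D2 f h) ∧ ∀ g ∈ G', ¬ G.D2 g h}

end Semigroupoid

section Repn

variable {Λ : Type u} {B : Type*} [Ring B] [StarRing B]

/-- initial projection -/
def QQ (S : Λ → B) (f : Λ) : B := star (S f) * S f

/-- final projection -/
def PP (S : Λ → B) (f : Λ) : B := S f * star (S f)

/-- A representation of a semigroupoid in a unital C*-algebra (Exel, Definition 4.1). -/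
structure IsRepn (G : Semigroupoid Λ) (S : Λ → B) : Prop where
  partialIsometry : ∀ f, S f * star (S f) * S f = S f
  map_comp : ∀ f g, G.D2 f g → S f * S g = S (G.mul f g)
  map_ncomp : ∀ f g, ¬ G.D2 f g → S f * S g = 0
  commQQ : ∀ f g, Commute (QQ S f) (QQ S g)
  commQP : ∀ f g, Commute (QQ S f) (PP S g)
  commPP : ∀ f g, Commute (PP S f) (PP S g)
  orthPP : ∀ f g, G.Disjnt f g → PP S f * PP S g = 0
  QdomP : ∀ f g, G.D2 f g → QQ S f * PP S g = PP S g

/-- the product `∏_{f ∈ F} T f` (of pairwise commuting elements), via a choice of order. -/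
noncomputable def fprod (F : Finset Λ) (T : Λ → B) : B := (F.toList.map T).prod

/-- the supremum `⋁_{h ∈ H} PP S h` of commuting final projections,
`P ∨ Q = P + Q - P Q`, i.e. `1 - ∏ (1 - P h)`. -/
noncomputable def joinP (H : Finset Λ) (S : Λ → B) : B := 1 - fprod H (fun h => 1 - PP S h)

/-- Tight representation (Exel, Definition 4.5). -/
def IsTight (G : Semigroupoid Λ) (S : Λ → B) : Prop :=
  ∀ (F G' H : Finset Λ), G.IsCovering ↑H (G.lamFG F G') →
    joinP H S = fprod F (QQ S) * fprod G' (fun g => 1 - QQ S g)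

end Repn

theorem star_eq_star_mul_self_mul_mul_star_self {R : Type*} [Semigroup R] [StarMul R] {a : R}
    (hidem : IsIdempotentElem a) (hpi : a * star a * a = a) :
    star a = star a * a * (a * star a) :=
  calc star a = star (a * star a * a) := by rw [hpi]
    _ = star a * a * star a := by simp only [star_mul, star_star, mul_assoc]
    _ = star a * (a * a) * star a := by rw [hidem.eq]
    _ = star a * a * (a * star a) := by simp only [mul_assoc]

theorem isStarProjection_of_isIdempotentElem_of_commute {R : Type*} [Semigroup R] [StarMul R]
    {a : R} (hidem : IsIdempotentElem a) (hpi : a * star a * a = a)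
    (hcomm : Commute (star a * a) (a * star a)) : IsStarProjection a := by
  have hprod : IsSelfAdjoint (star a * a * (a * star a)) :=
    ((IsSelfAdjoint.star_mul_self a).commute_iff (IsSelfAdjoint.mul_star_self a)).1 hcomm
  rw [← star_eq_star_mul_self_mul_mul_star_self hidem hpi] at hprod
  exact ⟨hidem, IsSelfAdjoint.star_iff.1 hprod⟩

namespace Semigroupoid

variable {Λ : Type u} (G : Semigroupoid Λ)

theorem intersects_self (f : Λ) : G.Intersects f f :=
  ⟨f, Or.inl rfl, Or.inl rfl⟩

theorem isCovering_self (X : Set Λ) : G.IsCovering X X :=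
  ⟨subset_rfl, fun f hf => ⟨f, hf, G.intersects_self f⟩⟩

theorem lamFG_singleton_empty (f : Λ) : G.lamFG {f} ∅ = G.lam f := by
  simp [lamFG, lam]

end Semigroupoid

section FiniteProduct

variable {Λ : Type u} {B : Type*} [Ring B]

theorem fprod_empty (T : Λ → B) : fprod ∅ T = 1 := by
  simp [fprod]

theorem fprod_singleton (f : Λ) (T : Λ → B) : fprod {f} T = T f := by
  simp [fprod]

end FiniteProduct

section TightRepn

variable {Λ : Type u} {B : Type*} [Ring B] [StarRing B] {G : Semigroupoid Λ} {S : Λ → B}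

theorem joinP_singleton (e : Λ) (S : Λ → B) : joinP {e} S = PP S e := by
  rw [joinP, fprod_singleton, sub_sub_cancel]

theorem IsTight.joinP_eq_QQ (ht : IsTight G S) {H : Finset Λ} {f : Λ}
    (hH : G.IsCovering ↑H (G.lam f)) : joinP H S = QQ S f := by
  rw [← G.lamFG_singleton_empty f] at hH
  rw [ht {f} ∅ H hH, fprod_singleton, fprod_empty, mul_one]

theorem IsTight.PP_eq_QQ (ht : IsTight G S) {e f : Λ} (he : G.IsCovering {e} (G.lam f)) :
    PP S e = QQ S f := by
  rw [← joinP_singleton]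
  exact ht.joinP_eq_QQ (by rwa [Finset.coe_singleton])

theorem IsRepn.isStarProjection_of_mul_self_eq (hS : IsRepn G S) {e : Λ} (hee : G.D2 e e)
    (hmul : G.mul e e = e) : IsStarProjection (S e) := by
  have hidem : IsIdempotentElem (S e) := by
    rw [IsIdempotentElem, hS.map_comp e e hee, hmul]
  exact isStarProjection_of_isIdempotentElem_of_commute hidem (hS.partialIsometry e)
    (hS.commQP e e)

theorem PP_eq_self_of_isStarProjection {e : Λ} (he : IsStarProjection (S e)) : PP S e = S e := by
  rw [PP, he.isSelfAdjoint.star_eq, he.isIdempotentElem.eq]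

theorem tight_repn_single_idempotent_general (hS : IsRepn G S) (ht : IsTight G S) {f e : Λ}
    (he : G.IsCovering {e} (G.lam f)) (hee : G.D2 e e) (hmul : G.mul e e = e) :
    IsStarProjection (S e) ∧ S e = QQ S f := by
  have hproj : IsStarProjection (S e) := hS.isStarProjection_of_mul_self_eq hee hmul
  exact ⟨hproj, (PP_eq_self_of_isStarProjection hproj).symm.trans (ht.PP_eq_QQ he)⟩

end TightRepn

/-- If `Λ^f = {e}` with `e` idempotent, then `S e` is a projection and `S e = Q_f`. -/
theorem tight_repn_single_idempotent {Λ : Type u} {B : Type*} [CStarAlgebra B]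
    {G : Semigroupoid Λ} {S : Λ → B} (hS : IsRepn G S) (ht : IsTight G S)
    (f e : Λ) (he : G.lam f = {e}) (hee : G.D2 e e) (hmul : G.mul e e = e) :
    (star (S e) = S e ∧ S e * S e = S e) ∧ S e = QQ S f := by
  have hcov : G.IsCovering {e} (G.lam f) := he ▸ G.isCovering_self {e}
  obtain ⟨hproj, hQ⟩ := tight_repn_single_idempotent_general hS ht hcov hee hmul
  exact ⟨⟨hproj.isSelfAdjoint, hproj.isIdempotentElem⟩, hQ⟩
end

section
/- Let Λ be a small category, viewed as a semigroupoid, and let S : Λ → B(H) be a representation on a Hilbert space H such that either S is nondegenerate or obj(Λ) is infinite. If for every object v of Λ and every finite covering H' of Λ^v one has ⋁_{h∈H'} P_h = P_v, then S is tight. -/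
universe u

/-- A small category, viewed as a semigroupoid whose elements are all its morphisms:
`(f,g)` is composable iff `s f = r g`; objects are identified with identity morphisms. -/
structure CatSemigroupoid (Λ : Type u) extends Semigroupoid Λ where
  /-- source (domain) of a morphism, as an identity morphism -/
  src : Λ → Λ
  /-- range (codomain) of a morphism, as an identity morphism -/
  rng : Λ → Λ
  /-- the morphisms which are (identities on) objects -/
  IsObj : Λ → Prop
  obj_src : ∀ f, IsObj (src f)
  obj_rng : ∀ f, IsObj (rng f)
  src_obj : ∀ v, IsObj v → src v = v
  rng_obj : ∀ v, IsObj v → rng v = v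
  comp_iff : ∀ f g, D2 f g ↔ src f = rng g
  mul_src : ∀ f, mul f (src f) = f
  rng_mul' : ∀ f, mul (rng f) f = f
  src_mul : ∀ f g, D2 f g → src (mul f g) = src g
  rng_mul : ∀ f g, D2 f g → rng (mul f g) = rng f

namespace CatSemigroupoid

variable {Λ : Type u} (C : CatSemigroupoid Λ)

/-- for an object `v`, `Λ^v = {g : r g = v}`. -/
def lamObj (v : Λ) : Set Λ := {g | C.rng g = v}

end CatSemigroupoid
section Hilb

variable {Λ : Type u} {H : Type*} [NormedAddCommGroup H] [InnerProductSpace ℂ H] [CompleteSpace H]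

/-- A representation on a Hilbert space is nondegenerate if the closed *-subalgebra of `B(H)`
generated by its range acts nondegenerately on `H`. -/
def Nondegen (S : Λ → (H →L[ℂ] H)) : Prop :=
  (Submodule.span ℂ {y : H | ∃ a ∈ (NonUnitalStarAlgebra.adjoin ℂ
      (Set.range S)).topologicalClosure, ∃ x : H, a x = y}).topologicalClosure = ⊤

end Hilb

/-!
An element lies in `Λ^{F,G'}` exactly when its range does. So if `K` covers `Λ^{F,G'}`, the two
sides of the tightness equation agree after multiplication by `S v`, for every object `v`: if
`v ∈ Λ^{F,G'}`, then `Λ^v ⊆ Λ^{F,G'}`, the elements of `K` with range `v` cover `Λ^v`, and both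
sides become `S v`; otherwise no element of `K` has range `v` and both sides become `0`.

It remains to cancel the `S v`. If `F` contains some `f`, then both sides are dominated by
`Q f = S (src f)`. If `F` is empty, then every object is the source of an element of `G'` or the
range of an element of `K`, so there are only finitely many objects. Hence `S` is nondegenerate, and
an operator vanishing on the range of every `S v` is zero.
-/

section FProd

variable {Λ : Type u} {B : Type*} [Ring B] {F : Finset Λ} {T : Λ → B} {x : B}

lemma pairwise_commute_one_sub {s : Set Λ} (hT : s.Pairwise (Function.onFun Commute T)) :
    s.Pairwise (Function.onFun Commute fun a => 1 - T a) :=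
  hT.imp fun _ _ hab =>
    (Commute.one_left _).sub_left ((Commute.one_right _).sub_right hab)

lemma fprod_eq_noncommProd (hT : (F : Set Λ).Pairwise (Function.onFun Commute T)) :
    fprod F T = F.noncommProd T hT := by
  classical
  simpa only [fprod, Finset.toList_toFinset] using
    (Finset.noncommProd_toFinset F.toList T (by simpa using hT) F.nodup_toList).symm

lemma commute_fprod (h : ∀ a ∈ F, Commute x (T a)) : Commute x (fprod F T) := by
  refine Commute.list_prod_right _ _ fun y hy => ?_
  obtain ⟨a, ha, rfl⟩ := List.mem_map.1 hy
  exact h a (Finset.mem_toList.1 ha)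

lemma fprod_mul_eq_right (h : ∀ a ∈ F, T a * x = x) : fprod F T * x = x := by
  have fixed_of_list : ∀ l : List Λ, (∀ a ∈ l, T a * x = x) → (l.map T).prod * x = x := by
    intro l hl
    induction l with
    | nil => simp
    | cons a l ih =>
      rw [List.forall_mem_cons] at hl
      rw [List.map_cons, List.prod_cons, mul_assoc, ih hl.2, hl.1]
  exact fixed_of_list F.toList fun a ha => h a (Finset.mem_toList.1 ha)

lemma fprod_erase_mul [DecidableEq Λ] (hT : (F : Set Λ).Pairwise (Function.onFun Commute T))
    {a : Λ} (ha : a ∈ F) : fprod (F.erase a) T * T a = fprod F T := by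
  rw [fprod_eq_noncommProd hT, fprod_eq_noncommProd (hT.mono (F.erase_subset a)),
    Finset.noncommProd_erase_mul F ha T hT]

lemma fprod_mul_eq_zero (hT : (F : Set Λ).Pairwise (Function.onFun Commute T))
    {a : Λ} (ha : a ∈ F) (hx : T a * x = 0) : fprod F T * x = 0 := by
  classical
  rw [← fprod_erase_mul hT ha, mul_assoc, hx, mul_zero]

lemma fprod_mul_eq_left_of_mem (hT : (F : Set Λ).Pairwise (Function.onFun Commute T))
    {a : Λ} (ha : a ∈ F) (hidem : IsIdempotentElem (T a)) : fprod F T * T a = fprod F T := by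
  classical
  rw [← fprod_erase_mul hT ha, mul_assoc, hidem.eq]

lemma fprod_filter_mul_fprod_filter_not (hT : (F : Set Λ).Pairwise (Function.onFun Commute T))
    (p : Λ → Prop) [DecidablePred p] :
    fprod {a ∈ F | p a} T * fprod {a ∈ F | ¬ p a} T = fprod F T := by
  classical
  rw [fprod_eq_noncommProd hT, fprod_eq_noncommProd (hT.mono (F.filter_subset _)),
    fprod_eq_noncommProd (hT.mono (F.filter_subset _)),
    ← Finset.noncommProd_union_of_disjoint (Finset.disjoint_filter_filter_not F F p)]
  · exact Finset.noncommProd_congr (Finset.filter_union_filter_not_eq p F) (fun _ _ => rfl) _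
  · simpa only [Finset.filter_union_filter_not_eq] using hT

lemma fprod_filter_mul (hT : (F : Set Λ).Pairwise (Function.onFun Commute T))
    (p : Λ → Prop) [DecidablePred p] (hx : ∀ a ∈ F, ¬ p a → T a * x = x) :
    fprod {a ∈ F | p a} T * x = fprod F T * x := by
  have fixed_by_rest : fprod {a ∈ F | ¬ p a} T * x = x :=
    fprod_mul_eq_right (by simpa only [Finset.mem_filter, and_imp] using hx)
  rw [← fprod_filter_mul_fprod_filter_not hT p, mul_assoc, fixed_by_rest]

end FProd

/-- Idempotency collapses `(s* s)(s s*)` to `s*` and `(s s*)(s* s)` to `s`. -/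
lemma isStarProjection_of_partialIsometry {R : Type*} [Semigroup R] [StarMul R] {s : R}
    (hidem : IsIdempotentElem s) (hpartial : s * star s * s = s)
    (hcomm : Commute (star s * s) (s * star s)) : IsStarProjection s := by
  have hidem_star : star s * star s = star s := by rw [← star_mul, hidem.eq]
  have hpartial_star : star s * s * star s = star s := by
    simpa [mul_assoc] using congrArg star hpartial
  refine ⟨hidem, ?_⟩
  calc star s = star s * (s * s) * star s := by rw [hidem.eq, hpartial_star]
    _ = star s * s * (s * star s) := by simp only [mul_assoc]
    _ = s * star s * (star s * s) := hcomm.eq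
    _ = s * (star s * star s) * s := by simp only [mul_assoc]
    _ = s := by rw [hidem_star, hpartial]

namespace CatSemigroupoid

variable {Λ : Type u} (C : CatSemigroupoid Λ)

lemma d2_src (f : Λ) : C.D2 f (C.src f) :=
  (C.comp_iff _ _).2 (C.rng_obj _ (C.obj_src f)).symm

lemma d2_rng (f : Λ) : C.D2 (C.rng f) f :=
  (C.comp_iff _ _).2 (C.src_obj _ (C.obj_rng f))

variable {C}

lemma rng_eq_of_divides {f m : Λ} (h : C.Divides f m) : C.rng f = C.rng m := by
  rcases h with rfl | ⟨k, hk, rfl⟩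
  · rfl
  · exact (C.rng_mul f k hk).symm

lemma rng_eq_of_intersects {f g : Λ} (h : C.Intersects f g) : C.rng f = C.rng g := by
  obtain ⟨m, hf, hg⟩ := h
  exact (rng_eq_of_divides hf).trans (rng_eq_of_divides hg).symm

lemma mem_lamFG_congr {F G' : Finset Λ} {h k : Λ} (hr : C.rng h = C.rng k) :
    h ∈ C.lamFG F G' ↔ k ∈ C.lamFG F G' := by
  simp only [Semigroupoid.lamFG, Set.mem_ofPred_eq, C.comp_iff, hr]

lemma isCovering_filter_rng [DecidableEq Λ] {K : Finset Λ} {X : Set Λ} {v : Λ}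
    (hK : C.IsCovering ↑K X) (hX : C.lamObj v ⊆ X) :
    C.IsCovering ↑({k ∈ K | C.rng k = v} : Finset Λ) (C.lamObj v) := by
  refine ⟨fun k hk => (Finset.mem_filter.1 hk).2, fun f hf => ?_⟩
  obtain ⟨k, hk, hfk⟩ := hK.2 f (hX hf)
  exact ⟨k, Finset.mem_filter.2 ⟨hk, (rng_eq_of_intersects hfk).symm.trans hf⟩, hfk⟩

lemma finite_isObj_of_isCovering_lamFG_empty {G' K : Finset Λ}
    (hK : C.IsCovering ↑K (C.lamFG ∅ G')) : {v | C.IsObj v}.Finite := by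
  refine ((G'.finite_toSet.image C.src).union (K.finite_toSet.image C.rng)).subset fun v hv => ?_
  have hvr : C.rng v = v := C.rng_obj v hv
  by_cases hG : ∃ g ∈ G', C.D2 g v
  · obtain ⟨g, hg, hgv⟩ := hG
    exact Or.inl ⟨g, hg, ((C.comp_iff g v).1 hgv).trans hvr⟩
  · obtain ⟨k, hk, hvk⟩ := hK.2 v ⟨by simp, by simpa using hG⟩
    exact Or.inr ⟨k, hk, (rng_eq_of_intersects hvk).symm.trans hvr⟩

end CatSemigroupoid

namespace IsRepn

section Semigroupoid

variable {Λ : Type u} {B : Type*} [Ring B] [StarRing B] {G : Semigroupoid Λ} {S : Λ → B}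
  {F G' K : Finset Λ}

lemma isIdempotentElem_QQ (hS : IsRepn G S) (f : Λ) : IsIdempotentElem (QQ S f) := by
  rw [IsIdempotentElem, QQ, mul_assoc, ← mul_assoc (S f), hS.partialIsometry]

lemma QQ_mul_of_d2 (hS : IsRepn G S) {f h : Λ} (hfh : G.D2 f h) : QQ S f * S h = S h := by
  rw [← hS.partialIsometry h, ← PP, ← mul_assoc, hS.QdomP f h hfh]

lemma QQ_mul_of_not_d2 (hS : IsRepn G S) {f h : Λ} (hfh : ¬ G.D2 f h) : QQ S f * S h = 0 := by
  rw [QQ, mul_assoc, hS.map_ncomp f h hfh, mul_zero]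

lemma pairwise_commute_QQ (hS : IsRepn G S) (F : Finset Λ) :
    (F : Set Λ).Pairwise (Function.onFun Commute (QQ S)) :=
  fun f _ g _ _ => hS.commQQ f g

lemma pairwise_commute_PP (hS : IsRepn G S) (F : Finset Λ) :
    (F : Set Λ).Pairwise (Function.onFun Commute (PP S)) :=
  fun f _ g _ _ => hS.commPP f g

lemma fprod_one_sub_QQ_mul_of_forall_not_d2 (hS : IsRepn G S) {h : Λ}
    (hG : ∀ g ∈ G', ¬ G.D2 g h) : fprod G' (fun g => 1 - QQ S g) * S h = S h :=
  fprod_mul_eq_right fun g hg => by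
    rw [sub_mul, hS.QQ_mul_of_not_d2 (hG g hg), one_mul, sub_zero]

lemma fprod_one_sub_QQ_mul_of_d2 (hS : IsRepn G S) {g h : Λ} (hg : g ∈ G') (hgh : G.D2 g h) :
    fprod G' (fun g => 1 - QQ S g) * S h = 0 :=
  fprod_mul_eq_zero (pairwise_commute_one_sub (hS.pairwise_commute_QQ G')) hg <| by
    rw [sub_mul, hS.QQ_mul_of_d2 hgh, one_mul, sub_self]

lemma fprod_QQ_mul_of_mem_lamFG (hS : IsRepn G S) {h : Λ} (hh : h ∈ G.lamFG F G') :
    fprod F (QQ S) * fprod G' (fun g => 1 - QQ S g) * S h = S h := by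
  rw [mul_assoc, hS.fprod_one_sub_QQ_mul_of_forall_not_d2 hh.2,
    fprod_mul_eq_right fun f hf => hS.QQ_mul_of_d2 (hh.1 f hf)]

lemma fprod_QQ_mul_of_notMem_lamFG (hS : IsRepn G S) {h : Λ} (hh : h ∉ G.lamFG F G') :
    fprod F (QQ S) * fprod G' (fun g => 1 - QQ S g) * S h = 0 := by
  by_cases hG : ∃ g ∈ G', G.D2 g h
  · obtain ⟨g, hg, hgh⟩ := hG
    rw [mul_assoc, hS.fprod_one_sub_QQ_mul_of_d2 hg hgh, mul_zero]
  · push Not at hG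
    obtain ⟨f, hf, hfh⟩ : ∃ f ∈ F, ¬ G.D2 f h := by
      by_contra! hF
      exact hh ⟨hF, hG⟩
    rw [mul_assoc, hS.fprod_one_sub_QQ_mul_of_forall_not_d2 hG]
    exact fprod_mul_eq_zero (hS.pairwise_commute_QQ F) hf (hS.QQ_mul_of_not_d2 hfh)

lemma fprod_QQ_mul_QQ_of_mem (hS : IsRepn G S) {f : Λ} (hf : f ∈ F) :
    fprod F (QQ S) * fprod G' (fun g => 1 - QQ S g) * QQ S f =
      fprod F (QQ S) * fprod G' (fun g => 1 - QQ S g) := by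
  have hcomm : Commute (QQ S f) (fprod G' fun g => 1 - QQ S g) :=
    commute_fprod fun g _ => (Commute.one_right _).sub_right (hS.commQQ f g)
  rw [mul_assoc, ← hcomm.eq, ← mul_assoc,
    fprod_mul_eq_left_of_mem (hS.pairwise_commute_QQ F) hf (hS.isIdempotentElem_QQ f)]

lemma joinP_mul_QQ (hS : IsRepn G S) {f : Λ} (hK : ∀ k ∈ K, G.D2 f k) :
    joinP K S * QQ S f = joinP K S := by
  have mul_compl : joinP K S * (1 - QQ S f) = 0 := by
    rw [joinP, sub_mul, one_mul, sub_eq_zero, eq_comm]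
    refine fprod_mul_eq_right fun k hk => ?_
    have hPQ : PP S k * QQ S f = PP S k := by
      rw [← (hS.commQP f k).eq, hS.QdomP f k (hK k hk)]
    rw [sub_mul, one_mul, mul_sub, mul_one, hPQ, sub_self, sub_zero]
  rwa [mul_sub, mul_one, sub_eq_zero, eq_comm] at mul_compl

end Semigroupoid

section Category

variable {Λ : Type u} {B : Type*} [Ring B] [StarRing B] {C : CatSemigroupoid Λ} {S : Λ → B}
  {K : Finset Λ} {v : Λ}

lemma map_rng_mul (hS : IsRepn C.toSemigroupoid S) (f : Λ) : S (C.rng f) * S f = S f := by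
  rw [hS.map_comp _ _ (C.d2_rng f), C.rng_mul']

lemma map_mul_src (hS : IsRepn C.toSemigroupoid S) (f : Λ) : S f * S (C.src f) = S f := by
  rw [hS.map_comp _ _ (C.d2_src f), C.mul_src]

lemma isStarProjection_of_isObj (hS : IsRepn C.toSemigroupoid S) (hv : C.IsObj v) :
    IsStarProjection (S v) := by
  have hidem : S v * S v = S v := by simpa only [C.src_obj v hv] using hS.map_mul_src v
  exact isStarProjection_of_partialIsometry hidem (hS.partialIsometry v) (hS.commQP v v)

lemma PP_of_isObj (hS : IsRepn C.toSemigroupoid S) (hv : C.IsObj v) : PP S v = S v := by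
  have hproj := hS.isStarProjection_of_isObj hv
  rw [PP, hproj.isSelfAdjoint.star_eq, hproj.isIdempotentElem.eq]

lemma QQ_eq_map_src (hS : IsRepn C.toSemigroupoid S) (f : Λ) : QQ S f = S (C.src f) := by
  rw [← hS.QQ_mul_of_d2 (C.d2_src f), QQ, mul_assoc, hS.map_mul_src]

lemma map_src_mul_star (hS : IsRepn C.toSemigroupoid S) (f : Λ) :
    S (C.src f) * star (S f) = star (S f) := by
  simpa [(hS.isStarProjection_of_isObj (C.obj_src f)).isSelfAdjoint.star_eq] using
    congrArg star (hS.map_mul_src f)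

lemma PP_mul_of_isObj_of_rng_ne (hS : IsRepn C.toSemigroupoid S) (hv : C.IsObj v) {f : Λ}
    (hf : C.rng f ≠ v) : PP S f * S v = 0 := by
  have hvf : S v * S f = 0 := hS.map_ncomp v f <| by
    rwa [C.comp_iff, C.src_obj v hv, eq_comm]
  have hfv : star (S f) * S v = 0 := by
    simpa [(hS.isStarProjection_of_isObj hv).isSelfAdjoint.star_eq] using congrArg star hvf
  rw [PP, mul_assoc, hfv, mul_zero]

lemma one_sub_PP_mul_of_isObj_of_rng_ne (hS : IsRepn C.toSemigroupoid S) (hv : C.IsObj v) {f : Λ}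
    (hf : C.rng f ≠ v) : (1 - PP S f) * S v = S v := by
  rw [sub_mul, one_mul, hS.PP_mul_of_isObj_of_rng_ne hv hf, sub_zero]

lemma joinP_filter_rng_mul [DecidableEq Λ] (hS : IsRepn C.toSemigroupoid S) (hv : C.IsObj v) :
    joinP {k ∈ K | C.rng k = v} S * S v = joinP K S * S v := by
  rw [joinP, joinP, sub_mul, sub_mul,
    fprod_filter_mul (pairwise_commute_one_sub (hS.pairwise_commute_PP K))]
  exact fun k _ hk => hS.one_sub_PP_mul_of_isObj_of_rng_ne hv hk

lemma joinP_mul_of_forall_rng_ne (hS : IsRepn C.toSemigroupoid S) (hv : C.IsObj v)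
    (hK : ∀ k ∈ K, C.rng k ≠ v) : joinP K S * S v = 0 := by
  rw [joinP, sub_mul, one_mul, fprod_mul_eq_right, sub_self]
  exact fun k hk => hS.one_sub_PP_mul_of_isObj_of_rng_ne hv (hK k hk)

lemma joinP_mul_of_lamObj_subset (hS : IsRepn C.toSemigroupoid S) (hv : C.IsObj v)
    (hcov : ∀ H' : Finset Λ, C.IsCovering ↑H' (C.lamObj v) → joinP H' S = PP S v)
    {X : Set Λ} (hK : C.IsCovering ↑K X) (hX : C.lamObj v ⊆ X) : joinP K S * S v = S v := by
  classical
  rw [← hS.joinP_filter_rng_mul hv, hcov _ (CatSemigroupoid.isCovering_filter_rng hK hX),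
    hS.PP_of_isObj hv, (hS.isStarProjection_of_isObj hv).isIdempotentElem.eq]

lemma joinP_mul_eq_fprod_QQ_mul (hS : IsRepn C.toSemigroupoid S) (hv : C.IsObj v)
    (hcov : ∀ H' : Finset Λ, C.IsCovering ↑H' (C.lamObj v) → joinP H' S = PP S v)
    {F G' : Finset Λ} (hK : C.IsCovering ↑K (C.lamFG F G')) :
    joinP K S * S v = fprod F (QQ S) * fprod G' (fun g => 1 - QQ S g) * S v := by
  have mem_iff_of_rng : ∀ h, C.rng h = v → (h ∈ C.lamFG F G' ↔ v ∈ C.lamFG F G') :=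
    fun h hh => CatSemigroupoid.mem_lamFG_congr (hh.trans (C.rng_obj v hv).symm)
  by_cases hmem : v ∈ C.lamFG F G'
  · rw [hS.fprod_QQ_mul_of_mem_lamFG hmem]
    exact hS.joinP_mul_of_lamObj_subset hv hcov hK fun h hh => (mem_iff_of_rng h hh).2 hmem
  · rw [hS.fprod_QQ_mul_of_notMem_lamFG hmem]
    exact hS.joinP_mul_of_forall_rng_ne hv fun k hk hkv =>
      hmem ((mem_iff_of_rng k hkv).1 (hK.1 hk))

end Category

end IsRepn

lemma mul_eq_zero_of_mem_adjoin {𝕜 R : Type*} [CommSemiring 𝕜] [StarRing 𝕜] [NonUnitalSemiring R]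
    [StarRing R] [Module 𝕜 R] [IsScalarTower 𝕜 R R] [SMulCommClass 𝕜 R R] [StarModule 𝕜 R]
    {s : Set R} {x a : R} (hx : ∀ b ∈ s, x * b = 0) (hx_star : ∀ b ∈ s, x * star b = 0)
    (ha : a ∈ NonUnitalStarAlgebra.adjoin 𝕜 s) : x * a = 0 := by
  suffices x * a = 0 ∧ x * star a = 0 from this.1
  induction ha using NonUnitalStarAlgebra.adjoin_induction with
  | mem b hb => exact ⟨hx b hb, hx_star b hb⟩
  | add a b _ _ ha hb => simp [mul_add, ha, hb]
  | zero => simp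
  | mul a b _ _ ha hb => simp [← mul_assoc, ha, hb]
  | smul c a _ ha => simp [mul_smul_comm, ha]
  | star a _ ha => simpa using ha.symm

section Nondegenerate

variable {Λ : Type u} {H : Type*} [NormedAddCommGroup H] [InnerProductSpace ℂ H] [CompleteSpace H]
  {S : Λ → H →L[ℂ] H}

lemma Nondegen.eq_zero_of_mul_eq_zero (hnd : Nondegen S) {X : H →L[ℂ] H}
    (hX : ∀ f, X * S f = 0) (hX_star : ∀ f, X * star (S f) = 0) : X = 0 := by
  have mul_closure : ∀ a ∈ (NonUnitalStarAlgebra.adjoin ℂ (Set.range S)).topologicalClosure,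
      X * a = 0 := by
    have hclosed : IsClosed {a : H →L[ℂ] H | X * a = 0} :=
      isClosed_eq (continuous_const_mul X) continuous_const
    exact closure_minimal (fun a ha => mul_eq_zero_of_mem_adjoin (Set.forall_mem_range.2 hX)
      (Set.forall_mem_range.2 hX_star) ha) hclosed
  refine ContinuousLinearMap.ext_on (Submodule.dense_iff_topologicalClosure_eq_top.2 hnd) ?_
  rintro _ ⟨a, ha, x, rfl⟩
  exact congrArg (fun T : H →L[ℂ] H => T x) (mul_closure a ha)

lemma IsRepn.eq_zero_of_forall_mul_isObj_eq_zero {C : CatSemigroupoid Λ}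
    (hS : IsRepn C.toSemigroupoid S) (hnd : Nondegen S) (X : H →L[ℂ] H)
    (hX : ∀ v, C.IsObj v → X * S v = 0) : X = 0 := by
  refine hnd.eq_zero_of_mul_eq_zero (fun f => ?_) fun f => ?_
  · rw [← hS.map_rng_mul f, ← mul_assoc, hX _ (C.obj_rng f), zero_mul]
  · rw [← hS.map_src_mul_star f, ← mul_assoc, hX _ (C.obj_src f), zero_mul]

end Nondegenerate

theorem cat_cover_join_implies_tight_general {Λ : Type u} {B : Type*} [Ring B] [StarRing B]
    (C : CatSemigroupoid Λ) {S : Λ → B} (hS : IsRepn C.toSemigroupoid S)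
    (hsep : (∀ X : B, (∀ v, C.IsObj v → X * S v = 0) → X = 0) ∨ {v | C.IsObj v}.Infinite)
    (hcov : ∀ v, C.IsObj v → ∀ H' : Finset Λ,
      C.IsCovering ↑H' (C.lamObj v) → joinP H' S = PP S v) :
    IsTight C.toSemigroupoid S := by
  intro F G' K hK
  have mul_obj_eq : ∀ v, C.IsObj v →
      joinP K S * S v = fprod F (QQ S) * fprod G' (fun g => 1 - QQ S g) * S v :=
    fun v hv => hS.joinP_mul_eq_fprod_QQ_mul hv (hcov v hv) hK
  rcases F.eq_empty_or_nonempty with rfl | ⟨f, hf⟩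
  · have hfinite := CatSemigroupoid.finite_isObj_of_isCovering_lamFG_empty hK
    refine sub_eq_zero.1 <| hsep.resolve_right (· hfinite) _ fun v hv => ?_
    rw [sub_mul, mul_obj_eq v hv, sub_self]
  · rw [← hS.joinP_mul_QQ fun k hk => (hK.1 hk).1 f hf, ← hS.fprod_QQ_mul_QQ_of_mem hf,
      hS.QQ_eq_map_src, mul_obj_eq _ (C.obj_src f)]

/-- For a nondegenerate (or infinite-object) representation of a small category on a
Hilbert space, the covering condition at objects implies tightness. -/
theorem cat_cover_join_implies_tight {Λ : Type u} {H : Type*} [NormedAddCommGroup H]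
    [InnerProductSpace ℂ H] [CompleteSpace H]
    (C : CatSemigroupoid Λ) {S : Λ → H →L[ℂ] H} (hS : IsRepn C.toSemigroupoid S)
    (hnd : Nondegen S ∨ (setOf C.IsObj).Infinite)
    (hcov : ∀ v, C.IsObj v → ∀ H' : Finset Λ,
      C.toSemigroupoid.IsCovering ↑H' (C.lamObj v) → joinP H' S = PP S v) :
    IsTight C.toSemigroupoid S := by
  exact cat_cover_join_implies_tight_general C hS
    (hnd.imp_left hS.eq_zero_of_forall_mul_isObj_eq_zero) hcov
end
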